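/- Pointwise bound for iterated Poisson integrals by volume: for f ∈ L¹(ℝⁿ) and u(x,t) = f *₁ P_{t₁} *₂ ⋯ *_m P_{t_m}(x) the iterated Poisson integral along unit vectors e₁,…,e_m (any n linearly independent), one has |u(x,t)| ≲ ‖f‖_{L¹(ℝⁿ)} / |R(0,t)| for all (x,t) ∈ ℝⁿ × (ℝ₊)^m, where R(0,t) is the twisted rectangle. -/

import Mathlib

open MeasureTheory

/-- The one-dimensional Poisson kernel `P_t(s) = (1/π) t/(t²+s²)`. -/
noncomputable def poisson (t s : ℝ) : ℝ := (1 / Real.pi) * (t / (t ^ 2 + s ^ 2))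

/-- The twisted rectangle `R(x,r) = {x + Σ λ_j e_j : |λ_j| < r_j}`. -/
def twistedRect {n m : ℕ} (e : Fin m → EuclideanSpace ℝ (Fin n))
    (x : EuclideanSpace ℝ (Fin n)) (r : Fin m → ℝ) : Set (EuclideanSpace ℝ (Fin n)) :=
  {y | ∃ lam : Fin m → ℝ, (∀ j, |lam j| < r j) ∧ y = x + ∑ j, lam j • e j}

/-- The iterated Poisson integral `u(x,t) = f *₁ P_{t₁} *₂ ⋯ *_m P_{t_m}(x)`. -/
noncomputable def iterPoisson {n m : ℕ} (e : Fin m → EuclideanSpace ℝ (Fin n))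
    (f : EuclideanSpace ℝ (Fin n) → ℝ) (t : Fin m → ℝ)
    (x : EuclideanSpace ℝ (Fin n)) : ℝ :=
  ∫ s : Fin m → ℝ, (∏ j, poisson (t j) (s j)) * f (x - ∑ j, s j • e j)

/-!
Among the bases of `ℝⁿ` that can be drawn from the vectors `t_j e_j`, take one of maximal
determinant. By Cramer's rule every `t_k e_k` has coordinates at most `1` in absolute value in this
basis, so `R(0,t)` lies in `m` times its unit box, of volume `∏ 2 m t_j` in units of the
parallelepiped spanned by the selected `e_j`. On the other hand, bounding `P_{t_j} ≤ 1 / (π t_j)` in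
the selected variables and using `∫ P_{t_j} = 1` in the others gives `|u| ≤ ∏ (π t_j)⁻¹ ‖f‖₁` in
the same unit of volume. The product of the two bounds is `(2 m / π) ^ n ‖f‖₁`, since the unit
and the `t_j` cancel.
-/

open Module Submodule
open scoped ENNReal Real

section LinearAlgebra

lemma span_range_eq_top_of_forall_card_eq_finrank {K V ι : Type*} [DivisionRing K] [AddCommGroup V]
    [Module K V] [FiniteDimensional K V] [Fintype ι] {e : ι → V}
    (hcard : finrank K V ≤ Fintype.card ι)
    (hindep : ∀ s : Finset ι, s.card = finrank K V → LinearIndependent K fun i : s => e i) :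
    span K (Set.range e) = ⊤ := by
  obtain ⟨s, -, hs⟩ := Finset.exists_subset_card_eq (s := (Finset.univ : Finset ι)) hcard
  have hspan := (hindep s hs).span_eq_top_of_card_eq_finrank' (by simp [hs])
  exact top_unique (hspan.ge.trans (span_mono (Set.range_comp_subset_range _ e)))

variable {𝕜 V ι : Type*} [NormedField 𝕜] [AddCommGroup V] [Module 𝕜 V] [Finite ι]

lemma exists_basis_forall_norm_repr_le_one {w : ι → V} (hw : span 𝕜 (Set.range w) = ⊤) :
    ∃ (s : Set ι) (b : Basis s 𝕜 V), (∀ j, b j = w j) ∧ ∀ j k, ‖b.repr (w k) j‖ ≤ 1 := by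
  classical
  obtain ⟨κ, a, ha, hspan, hli⟩ := exists_linearIndependent' 𝕜 w
  have : Fintype κ := @Fintype.ofFinite κ (.of_injective a ha)
  have : Nonempty (κ → ι) := ⟨a⟩
  let b₀ : Basis κ 𝕜 V := .mk hli (hspan.trans hw).ge
  obtain ⟨σ, hσ⟩ := Finite.exists_max fun σ : κ → ι => ‖b₀.det (w ∘ σ)‖
  have hdet : 0 < ‖b₀.det (w ∘ σ)‖ := by
    have hone : b₀.det (w ∘ a) = 1 := by simpa [b₀] using b₀.det_self
    exact zero_lt_one.trans_le (by simpa [hone] using hσ a)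
  obtain ⟨hli', hspan'⟩ := b₀.is_basis_iff_det.2 (norm_pos_iff.1 hdet).isUnit
  have hrepr (i : κ) (k : ι) : ‖(Basis.mk hli' hspan'.ge).repr (w k) i‖ ≤ 1 := by
    have hcramer := LinearMap.congr_fun (b₀.det_smul_mk_coord_eq_det_update hli' hspan'.ge i) (w k)
    have hupdate : Function.update (w ∘ σ) i (w k) = w ∘ Function.update σ i k :=
      (Function.comp_update w σ i k).symm
    simp only [LinearMap.smul_apply, Basis.coord_apply, smul_eq_mul,
      MultilinearMap.toLinearMap_apply, hupdate] at hcramer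
    refine le_of_mul_le_mul_left ?_ hdet
    rw [← norm_mul, hcramer, mul_one]
    exact hσ _
  let τ : κ ≃ Set.range σ := .ofInjective σ (hli'.injective.of_comp)
  refine ⟨Set.range σ, (Basis.mk hli' hspan'.ge).reindex τ, fun j => ?_, fun j k => ?_⟩
  · obtain ⟨i, rfl⟩ := τ.surjective j
    simp [τ]
  · simpa using hrepr (τ.symm j) k

lemma exists_basis_forall_norm_mul_norm_repr_le {e : ι → V} (he : span 𝕜 (Set.range e) = ⊤)
    {t : ι → 𝕜} (ht : ∀ j, t j ≠ 0) :
    ∃ (s : Set ι) (b : Basis s 𝕜 V), (∀ j, b j = e j) ∧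
      ∀ j k, ‖t k‖ * ‖b.repr (e k) j‖ ≤ ‖t j‖ := by
  have hspan : span 𝕜 (Set.range fun j => t j • e j) = ⊤ := by
    refine top_unique (he.ge.trans (span_le.2 ?_))
    rintro _ ⟨j, rfl⟩
    rw [← inv_smul_smul₀ (ht j) (e j)]
    exact smul_mem _ _ (subset_span ⟨j, rfl⟩)
  obtain ⟨s, b, hb, hrepr⟩ := exists_basis_forall_norm_repr_le_one hspan
  have hunit (j : s) : IsUnit (t j)⁻¹ := (inv_ne_zero (ht j)).isUnit
  refine ⟨s, b.isUnitSMul hunit, fun j => ?_, fun j k => ?_⟩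
  · rw [Basis.isUnitSMul_apply, hb, inv_smul_smul₀ (ht j)]
  · calc ‖t k‖ * ‖(b.isUnitSMul hunit).repr (e k) j‖ = ‖t j‖ * ‖b.repr (t k • e k) j‖ := by
          simp [Basis.repr_isUnitSMul, Units.smul_def, mul_left_comm]
      _ ≤ ‖t j‖ := mul_le_of_le_one_right (norm_nonneg _) (hrepr j k)

end LinearAlgebra

section Measure

section Pi

variable {ι : Type*} [Fintype ι] {α : ι → Type*} [∀ j, MeasurableSpace (α j)]
  {μ : ∀ j, Measure (α j)} [∀ j, SigmaFinite (μ j)]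

lemma lintegral_ofReal_prod_eq_prod_integral {k : ∀ j, α j → ℝ} (hk_nonneg : ∀ j s, 0 ≤ k j s)
    (hk : ∀ j, Integrable (k j) (μ j)) :
    ∫⁻ s, ENNReal.ofReal (∏ j, k j (s j)) ∂.pi μ = ENNReal.ofReal (∏ j, ∫ s, k j s ∂μ j) := by
  rw [← integral_fintype_prod_eq_prod, ofReal_integral_eq_lintegral_ofReal (.fintype_prod_dep hk)]
  exact .of_forall fun s => Finset.prod_nonneg fun j _ => hk_nonneg j _

lemma lintegral_pi_le_lintegral_lintegral_subtype (p : ι → Prop) [DecidablePred p]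
    (G : (∀ j : {j // p j}, α j) → (∀ j : {j // ¬p j}, α j) → ℝ≥0∞) :
    ∫⁻ s, G (fun j => s j) (fun j => s j) ∂.pi μ ≤
      ∫⁻ s₂, ∫⁻ s₁, G s₁ s₂ ∂.pi (fun j : {j // p j} => μ j) ∂.pi fun j : {j // ¬p j} => μ j :=
  calc ∫⁻ s, G (fun j => s j) (fun j => s j) ∂.pi μ
    _ = ∫⁻ q, G q.1 q.2 ∂(Measure.pi fun j : {j // p j} => μ j).prod
          (.pi fun j : {j // ¬p j} => μ j) :=
      (measurePreserving_piEquivPiSubtypeProd μ p).lintegral_comp_emb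
        (MeasurableEquiv.measurableEmbedding _) fun q => G q.1 q.2
    _ = ∫⁻ q, G q.2 q.1 ∂(Measure.pi fun j : {j // ¬p j} => μ j).prod
          (.pi fun j : {j // p j} => μ j) :=
      (lintegral_prod_swap fun q => G q.1 q.2).symm
    _ ≤ _ := lintegral_prod_le _

end Pi

variable {E : Type*} [NormedAddCommGroup E] [NormedSpace ℝ E] [MeasurableSpace E] [BorelSpace E]

section Coordinates

variable {κ : Type*} [Fintype κ] (b : Basis κ ℝ E)

lemma measurableEmbedding_sum_smul :
    MeasurableEmbedding fun s : κ → ℝ => ∑ j, s j • b j := by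
  convert b.equivFunL.symm.toHomeomorph.measurableEmbedding with s
  exact (b.equivFun_symm_apply s).symm

lemma measurePreserving_sum_smul :
    MeasurePreserving (fun s : κ → ℝ => ∑ j, s j • b j) volume b.addHaar where
  measurable := (measurableEmbedding_sum_smul b).measurable
  map_eq := by
    classical
    have := Module.Finite.of_basis b
    have := FiniteDimensional.proper_real E
    have hsum : (fun s : κ → ℝ => ∑ j, s j • b j) = b.equivFunL.symm :=
      funext fun s => (b.equivFun_symm_apply s).symm
    rw [hsum, ← addHaarMeasure_eq_volume_pi, ← Basis.parallelepiped_basisFun, ← Basis.addHaar_def,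
      Basis.map_addHaar]
    congr 1
    exact Basis.eq_of_apply_eq fun i => by simp [← hsum, Pi.single_apply]

lemma lintegral_comp_sub_sum_smul (g : E → ℝ≥0∞) (x : E) :
    ∫⁻ s : κ → ℝ, g (x - ∑ j, s j • b j) = ∫⁻ y, g y ∂b.addHaar :=
  calc ∫⁻ s : κ → ℝ, g (x - ∑ j, s j • b j)
    _ = ∫⁻ s : κ → ℝ, g (∑ j, (b.repr x j - s j) • b j) := by
      simp only [sub_smul, Finset.sum_sub_distrib, b.sum_repr]
    _ = ∫⁻ s : κ → ℝ, g (∑ j, s j • b j) :=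
      lintegral_sub_left_eq_self (fun s : κ → ℝ => g (∑ j, s j • b j)) (b.repr x)
    _ = ∫⁻ y, g y ∂b.addHaar :=
      (measurePreserving_sum_smul b).lintegral_comp_emb (measurableEmbedding_sum_smul b) g

variable {b} in
lemma addHaar_le_of_forall_abs_repr_le {A : Set E} {r : κ → ℝ}
    (hA : ∀ y ∈ A, ∀ j, |b.repr y j| ≤ r j) :
    b.addHaar A ≤ ∏ j, ENNReal.ofReal (2 * r j) := by
  rw [← (measurePreserving_sum_smul b).measure_preimage_emb (measurableEmbedding_sum_smul b)]
  calc volume ((fun s : κ → ℝ => ∑ j, s j • b j) ⁻¹' A)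
    _ ≤ volume (Set.univ.pi fun j => Set.Icc (-r j) (r j)) := measure_mono fun s hs j _ =>
        abs_le.1 (by simpa only [b.repr_sum_self] using hA _ hs j)
    _ = ∏ j, ENNReal.ofReal (2 * r j) := by
      simp only [volume_pi_pi, Real.volume_Icc, sub_neg_eq_add, two_mul]

end Coordinates

lemma lintegral_prod_mul_comp_sub_sum_smul_le {ι : Type*} [Fintype ι] (p : ι → Prop)
    [DecidablePred p] {w : ι → E} {b : Basis {j // p j} ℝ E} (hb : ∀ j, b j = w j)
    {k : ι → ℝ → ℝ} {c : ι → ℝ} (hk_nonneg : ∀ j s, 0 ≤ k j s) (hk_one : ∀ j, ∫ s, k j s = 1)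
    (hk_le : ∀ j s, k j s ≤ c j) (g : E → ℝ≥0∞) (x : E) :
    ∫⁻ s : ι → ℝ, ENNReal.ofReal (∏ j, k j (s j)) * g (x - ∑ j, s j • w j) ≤
      ENNReal.ofReal (∏ j : {j // p j}, c j) * ∫⁻ y, g y ∂b.addHaar := by
  let K (s : {j // ¬p j} → ℝ) : ℝ≥0∞ := ENNReal.ofReal (∏ j : {j // ¬p j}, k j (s j))
  let C : ℝ≥0∞ := ENNReal.ofReal (∏ j : {j // p j}, c j)
  let G (s₁ : {j // p j} → ℝ) (s₂ : {j // ¬p j} → ℝ) : ℝ≥0∞ :=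
    C * K s₂ * g (x - ∑ j : {j // ¬p j}, s₂ j • w j - ∑ j, s₁ j • b j)
  have hkernel (s : ι → ℝ) : ENNReal.ofReal (∏ j, k j (s j)) ≤ C * K fun j => s j := by
    refine (ENNReal.ofReal_le_ofReal ?_).trans_eq
      (ENNReal.ofReal_mul' (Finset.prod_nonneg fun j _ => hk_nonneg j _))
    rw [← Fintype.prod_subtype_mul_prod_subtype p]
    exact mul_le_mul_of_nonneg_right
      (Finset.prod_le_prod (fun j _ => hk_nonneg j _) fun j _ => hk_le j _)
      (Finset.prod_nonneg fun j _ => hk_nonneg j _)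
  have hpoint (s : ι → ℝ) : x - ∑ j, s j • w j =
      x - ∑ j : {j // ¬p j}, s j • w j - ∑ j : {j // p j}, s j • b j := by
    simp only [hb, sub_sub, ← Fintype.sum_subtype_add_sum_subtype p fun j => s j • w j, add_comm]
  have hk (j : ι) : Integrable (k j) := .of_integral_ne_zero (by simp [hk_one])
  have hK_meas : AEMeasurable K :=
    (Integrable.fintype_prod fun j : {j // ¬p j} => hk j).1.aemeasurable.ennreal_ofReal
  have hK : ∫⁻ s, K s = 1 := by
    simp only [K, volume_pi]
    rw [lintegral_ofReal_prod_eq_prod_integral (fun j : {j // ¬p j} => hk_nonneg j) fun j => hk j]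
    simp only [hk_one, Finset.prod_const_one, ENNReal.ofReal_one]
  calc ∫⁻ s : ι → ℝ, ENNReal.ofReal (∏ j, k j (s j)) * g (x - ∑ j, s j • w j)
    _ ≤ ∫⁻ s : ι → ℝ, G (fun j => s j) (fun j => s j) := lintegral_mono fun s => by
      rw [hpoint]
      exact mul_le_mul_left (hkernel s) _
    _ ≤ ∫⁻ s₂, ∫⁻ s₁, G s₁ s₂ :=
      lintegral_pi_le_lintegral_lintegral_subtype (α := fun _ => ℝ) p G
    _ = ∫⁻ s₂, K s₂ * (C * ∫⁻ y, g y ∂b.addHaar) := lintegral_congr fun s₂ => by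
      rw [lintegral_const_mul' _ _ (by finiteness), lintegral_comp_sub_sum_smul]
      ring
    _ = C * ∫⁻ y, g y ∂b.addHaar := by
      rw [lintegral_mul_const'' _ hK_meas, hK, one_mul]

end Measure

section Poisson

variable {t : ℝ}

lemma poisson_nonneg (ht : 0 ≤ t) (s : ℝ) : 0 ≤ poisson t s := by
  unfold poisson; positivity

lemma poisson_le (ht : 0 < t) (s : ℝ) : poisson t s ≤ (π * t)⁻¹ :=
  calc 1 / π * (t / (t ^ 2 + s ^ 2))
    _ ≤ 1 / π * (t / t ^ 2) := by gcongr; exact le_add_of_nonneg_right (sq_nonneg s)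
    _ = (π * t)⁻¹ := by field_simp

lemma poisson_eq_cauchyPDFReal (ht : 0 ≤ t) :
    poisson t = ProbabilityTheory.cauchyPDFReal 0 t.toNNReal := by
  ext s
  rw [ProbabilityTheory.cauchyPDFReal_def, Real.coe_toNNReal t ht, poisson]
  ring

lemma integral_poisson (ht : 0 < t) : ∫ s, poisson t s = 1 := by
  rw [poisson_eq_cauchyPDFReal ht.le, ProbabilityTheory.integral_cauchyPDFReal_eq_one]
  exact (Real.toNNReal_pos.2 ht).ne'

end Poisson

section TwistedRect

variable {n m : ℕ} {e : Fin m → EuclideanSpace ℝ (Fin n)} {t : Fin m → ℝ}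

lemma twistedRect_zero_eq_image :
    twistedRect e 0 t =
      Fintype.linearCombination ℝ e '' Set.univ.pi fun j => Set.Ioo (-t j) (t j) := by
  ext y
  simp only [twistedRect, zero_add, Set.mem_ofPred_eq, Set.mem_image, Set.mem_univ_pi, Set.mem_Ioo,
    ← abs_lt, Fintype.linearCombination_apply, eq_comm (a := y)]

lemma volume_twistedRect_pos (he : span ℝ (Set.range e) = ⊤) (ht : ∀ j, 0 < t j) :
    0 < volume (twistedRect e 0 t) := by
  rw [twistedRect_zero_eq_image]
  have hopen : IsOpen (Set.univ.pi fun j => Set.Ioo (-t j) (t j)) :=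
    isOpen_set_pi Set.finite_univ fun _ _ => isOpen_Ioo
  have hsurj : Function.Surjective (Fintype.linearCombination ℝ e) := by
    rw [← LinearMap.range_eq_top, Fintype.range_linearCombination, he]
  exact (LinearMap.isOpenMap_of_finiteDimensional _ hsurj _ hopen).measure_pos _
    ⟨_, 0, fun j _ => by simpa using ht j, rfl⟩

lemma volume_twistedRect_lt_top : volume (twistedRect e 0 t) < ∞ := by
  rw [twistedRect_zero_eq_image]
  have hcompact : IsCompact (Set.univ.pi fun j => Set.Icc (-t j) (t j)) :=
    isCompact_univ_pi fun _ => isCompact_Icc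
  refine (measure_mono (Set.image_mono (Set.pi_mono fun _ _ => Set.Ioo_subset_Icc_self))).trans_lt
    (hcompact.image ?_).measure_lt_top
  exact LinearMap.continuous_of_finiteDimensional _

lemma abs_repr_le_of_mem_twistedRect {κ : Type*} {b : Basis κ ℝ (EuclideanSpace ℝ (Fin n))} {i : κ}
    {r : ℝ} (hb : ∀ k, t k * |b.repr (e k) i| ≤ r) {y : EuclideanSpace ℝ (Fin n)}
    (hy : y ∈ twistedRect e 0 t) : |b.repr y i| ≤ m * r := by
  obtain ⟨lam, hlam, rfl⟩ := hy
  calc |b.repr (0 + ∑ k, lam k • e k) i|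
    _ = |∑ k, lam k * b.repr (e k) i| := by simp
    _ ≤ ∑ k, |lam k| * |b.repr (e k) i| := by
      simpa only [abs_mul] using Finset.abs_sum_le_sum_abs (fun k => lam k * b.repr (e k) i) _
    _ ≤ ∑ _k : Fin m, r := by
      gcongr with k
      exact (mul_le_mul_of_nonneg_right (hlam k).le (abs_nonneg _)).trans (hb k)
    _ = m * r := by simp

end TwistedRect

section IterPoisson

variable {n m : ℕ} {e : Fin m → EuclideanSpace ℝ (Fin n)} {t : Fin m → ℝ}

lemma enorm_iterPoisson_le (p : Fin m → Prop) [DecidablePred p]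
    {b : Basis {j // p j} ℝ (EuclideanSpace ℝ (Fin n))} (hb : ∀ j, b j = e j) (ht : ∀ j, 0 < t j)
    (f : EuclideanSpace ℝ (Fin n) → ℝ) (x : EuclideanSpace ℝ (Fin n)) :
    ‖iterPoisson e f t x‖ₑ ≤
      ENNReal.ofReal (∏ j : {j // p j}, (π * t j)⁻¹) * ∫⁻ y, ‖f y‖ₑ ∂b.addHaar :=
  calc ‖iterPoisson e f t x‖ₑ
    _ ≤ ∫⁻ s : Fin m → ℝ, ‖(∏ j, poisson (t j) (s j)) * f (x - ∑ j, s j • e j)‖ₑ :=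
      enorm_integral_le_lintegral_enorm _
    _ = ∫⁻ s : Fin m → ℝ,
          ENNReal.ofReal (∏ j, poisson (t j) (s j)) * ‖f (x - ∑ j, s j • e j)‖ₑ := by
      refine lintegral_congr fun s => ?_
      rw [enorm_mul, Real.enorm_of_nonneg]
      exact Finset.prod_nonneg fun j _ => poisson_nonneg (ht j).le _
    _ ≤ _ := lintegral_prod_mul_comp_sub_sum_smul_le p hb (fun j => poisson_nonneg (ht j).le)
      (fun j => integral_poisson (ht j)) (fun j => poisson_le (ht j)) (fun y => ‖f y‖ₑ) x

lemma enorm_iterPoisson_mul_volume_twistedRect_le (he : span ℝ (Set.range e) = ⊤)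
    (ht : ∀ j, 0 < t j) (f : EuclideanSpace ℝ (Fin n) → ℝ) (x : EuclideanSpace ℝ (Fin n)) :
    ‖iterPoisson e f t x‖ₑ * volume (twistedRect e 0 t) ≤
      ENNReal.ofReal ((2 * m / π) ^ n) * ∫⁻ y, ‖f y‖ₑ := by
  classical
  obtain ⟨s, b, hb, hrepr⟩ := exists_basis_forall_norm_mul_norm_repr_le he fun j => (ht j).ne'
  simp only [Real.norm_eq_abs, abs_of_pos (ht _)] at hrepr
  set V := volume (b.parallelepiped : Set (EuclideanSpace ℝ (Fin n)))
  have hvol : (volume : Measure (EuclideanSpace ℝ (Fin n))) = V • b.addHaar := by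
    rw [Basis.addHaar_def]
    exact Measure.addHaarMeasure_unique _ _
  have hrect : b.addHaar (twistedRect e 0 t) ≤ ENNReal.ofReal (∏ j : s, (2 * (m * t j))) := by
    rw [ENNReal.ofReal_prod_of_nonneg fun j _ => by have := ht j; positivity]
    exact addHaar_le_of_forall_abs_repr_le fun y hy j => abs_repr_le_of_mem_twistedRect (hrepr j) hy
  have hcard : Fintype.card s = n := by
    rw [← finrank_eq_card_basis b, finrank_euclideanSpace_fin]
  have hconst : (∏ j : s, (π * t j)⁻¹) * ∏ j : s, (2 * (m * t j)) = (2 * m / π) ^ n := by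
    rw [← Finset.prod_mul_distrib, ← hcard, ← Finset.card_univ, ← Finset.prod_const]
    refine Finset.prod_congr rfl fun j _ => ?_
    have := (ht j).ne'
    field_simp
  have hinv_nonneg : 0 ≤ ∏ j : s, (π * t j)⁻¹ :=
    Finset.prod_nonneg fun j _ => by have := ht j; positivity
  rw [← hconst, ENNReal.ofReal_mul hinv_nonneg, hvol, Measure.smul_apply, lintegral_smul_measure,
    smul_eq_mul, smul_eq_mul]
  set A := ENNReal.ofReal (∏ j : s, (π * t j)⁻¹)
  calc ‖iterPoisson e f t x‖ₑ * (V * b.addHaar (twistedRect e 0 t))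
    _ ≤ (A * ∫⁻ y, ‖f y‖ₑ ∂b.addHaar) * (V * ENNReal.ofReal (∏ j : s, (2 * (m * t j)))) := by
      gcongr
      exact enorm_iterPoisson_le (· ∈ s) hb ht f x
    _ = _ := by ring

lemma two_mul_div_pi_pow_pos (hnm : n ≤ m) : 0 < (2 * m / π) ^ n := by
  obtain rfl | hn := n.eq_zero_or_pos
  · simp
  · have hm : 0 < m := hn.trans_le hnm
    positivity

theorem iterPoisson_pointwise_bound_general (he : span ℝ (Set.range e) = ⊤)
    {f : EuclideanSpace ℝ (Fin n) → ℝ} (hf : Integrable f) (x : EuclideanSpace ℝ (Fin n))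
    (ht : ∀ j, 0 < t j) :
    |iterPoisson e f t x| ≤
      (2 * m / π) ^ n * (∫ y, |f y|) / (volume (twistedRect e 0 t)).toReal := by
  have hpos := ENNReal.toReal_pos (volume_twistedRect_pos he ht).ne' volume_twistedRect_lt_top.ne
  have hnorm : ∫⁻ y, ‖f y‖ₑ = ENNReal.ofReal (∫ y, |f y|) :=
    (ofReal_integral_norm_eq_lintegral_enorm hf).symm
  have hbound := enorm_iterPoisson_mul_volume_twistedRect_le he ht f x
  rw [hnorm, ← ENNReal.ofReal_mul (by positivity)] at hbound
  rw [le_div_iff₀ hpos]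
  simpa using ENNReal.toReal_le_of_le_ofReal (by positivity) hbound

end IterPoisson

/-- Pointwise bound for iterated Poisson integrals by the volume of the
twisted rectangle: `|u(x,t)| ≲ ‖f‖₁ / |R(0,t)|`. -/
theorem iterPoisson_pointwise_bound {n m : ℕ} (hnm : n ≤ m)
    (e : Fin m → EuclideanSpace ℝ (Fin n))
    (hunit : ∀ j, ‖e j‖ = 1)
    (hindep : ∀ s : Finset (Fin m), s.card = n →
      LinearIndependent ℝ (fun i : s => e i)) :
    ∃ C : ℝ, 0 < C ∧
      ∀ (f : EuclideanSpace ℝ (Fin n) → ℝ), Integrable f →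
      ∀ (x : EuclideanSpace ℝ (Fin n)) (t : Fin m → ℝ), (∀ j, 0 < t j) →
        |iterPoisson e f t x| ≤
          C * (∫ y, |f y|) / (volume (twistedRect e 0 t)).toReal := by
  have hspan : span ℝ (Set.range e) = ⊤ :=
    span_range_eq_top_of_forall_card_eq_finrank (by simpa) (by simpa)
  exact ⟨_, two_mul_div_pi_pow_pos hnm, fun _ hf x _ =>
    iterPoisson_pointwise_bound_general hspan hf x⟩
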